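/- arXiv:2403.02187 — 3 statements merged into one kernel-verified Lean document; each statement's English description precedes it below -/
import Mathlib

section
/- Let (ξ, η) be an absolutely continuous pair of random vectors with joint density p_{ξ,η} and marginals p_ξ, p_η, and let q_{ξ,η} be another density on the same space with marginals q_ξ, q_η. Then |I(ξ; η) − I_q(ξ; η)| ≤ D_KL(p_{ξ,η} ‖ q_{ξ,η}), where I_q(ξ; η) = E_{(ξ,η)∼p_{ξ,η}}[log(q_{ξ,η}(ξ, η)/(q_ξ(ξ) q_η(η)))]. -/
/-!
Write `K = D_KL(p ‖ q)` and let `A`, `B` be the divergences between the first and between the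
second marginals. Splitting logarithms gives `I - I_q = K - A - B`, so `0 ≤ A ≤ K` and `0 ≤ B ≤ K`
suffice.

Both bounds on `A` come from `a - b ≤ a log (a / b)` with `a = p`. With `r = pX / qX`, taking
`b = p / r` gives `0 ≤ A`, and `b = q r` gives `A ≤ K`: these two functions arise from `p` and `q`
by exchanging the first marginals while keeping the conditional densities, hence have total mass at
most that of `q` and `p` respectively. Since the resulting pointwise bounds on `p log r` are
integrable, `A` is finite as soon as `K` is.
-/

open MeasureTheory Real

lemma sub_le_mul_log_div {a b : ℝ} (ha : 0 ≤ a) (hb : 0 ≤ b) (hab : b = 0 → a = 0) :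
    a - b ≤ a * log (a / b) := by
  rcases ha.eq_or_lt with rfl | ha
  · simpa using hb
  · have hb : 0 < b := hb.lt_of_ne' fun h => ha.ne' (hab h)
    calc a - b = a * (1 - (a / b)⁻¹) := by field_simp
      _ ≤ a * log (a / b) := by gcongr; exact one_sub_inv_le_log_of_pos (div_pos ha hb)

lemma mul_log_div_mul_sub_mul_log_div_mul {p q a b c d : ℝ} (hq : q = 0 → p = 0)
    (hac : a / c = 0 → p = 0) (hbd : b / d = 0 → p = 0) :
    p * log (p / (a * b)) - p * log (q / (c * d)) =
      p * log (p / q) - p * log (a / c) - p * log (b / d) := by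
  by_cases hp : p = 0
  · simp [hp]
  · obtain ⟨ha, hc⟩ := div_ne_zero_iff.1 fun h => hp (hac h)
    obtain ⟨hb, hd⟩ := div_ne_zero_iff.1 fun h => hp (hbd h)
    have hq : q ≠ 0 := fun h => hp (hq h)
    rw [log_div hp (mul_ne_zero ha hb), log_div hq (mul_ne_zero hc hd), log_div hp hq,
      log_div ha hc, log_div hb hd, log_mul ha hb, log_mul hc hd]
    ring

section CoarseRatio

variable {Ω Ω' : Type*} [MeasurableSpace Ω] [MeasurableSpace Ω']
  {μ : Measure Ω} {μ' : Measure Ω'} {p q r : Ω → ℝ}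

/-- The properties, relative to densities `p` and `q`, of the ratio `r` of the densities of their
images under a map (such as a coordinate projection), pulled back along that map. They suffice to
compare the divergence of the images with that of `p` and `q`. The masses are only bounded, since
mass is lost where a denominator vanishes and the quotient is `0`. -/
structure IsCoarseRatio (μ : Measure Ω) (p q r : Ω → ℝ) : Prop where
  aestronglyMeasurable : AEStronglyMeasurable r μ
  nonneg : 0 ≤ᵐ[μ] r
  eq_zero : ∀ᵐ z ∂μ, r z = 0 → p z = 0
  integrable_mul : Integrable (fun z => q z * r z) μ
  integral_mul_le : ∫ z, q z * r z ∂μ ≤ ∫ z, p z ∂μ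
  integrable_div : Integrable (fun z => p z / r z) μ
  integral_div_le : ∫ z, p z / r z ∂μ ≤ ∫ z, q z ∂μ

namespace IsCoarseRatio

lemma comp_measurableEquiv (h : IsCoarseRatio μ p q r) (e : Ω' ≃ᵐ Ω)
    (he : MeasurePreserving e μ' μ) : IsCoarseRatio μ' (p ∘ e) (q ∘ e) (r ∘ e) where
  aestronglyMeasurable := h.aestronglyMeasurable.comp_measurePreserving he
  nonneg := he.quasiMeasurePreserving.ae h.nonneg
  eq_zero := he.quasiMeasurePreserving.ae h.eq_zero
  integrable_mul := he.integrable_comp_of_integrable h.integrable_mul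
  integral_mul_le := by
    simpa only [Function.comp_apply, he.integral_comp' p, he.integral_comp' fun z => q z * r z]
      using h.integral_mul_le
  integrable_div := he.integrable_comp_of_integrable h.integrable_div
  integral_div_le := by
    simpa only [Function.comp_apply, he.integral_comp' q, he.integral_comp' fun z => p z / r z]
      using h.integral_div_le

lemma ae_sub_div_le_mul_log (h : IsCoarseRatio μ p q r) (hp0 : 0 ≤ᵐ[μ] p) :
    ∀ᵐ z ∂μ, p z - p z / r z ≤ p z * log (r z) := by
  filter_upwards [hp0, h.nonneg, h.eq_zero] with z hp hr hrp
  by_cases hpz : p z = 0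
  · simp [hpz]
  · have hlog := sub_le_mul_log_div hp (div_nonneg hp hr) fun h0 =>
      (div_eq_zero_iff.1 h0).elim id hrp
    rwa [div_div_cancel₀ hpz] at hlog

lemma ae_mul_log_le (h : IsCoarseRatio μ p q r) (hp0 : 0 ≤ᵐ[μ] p) (hq0 : 0 ≤ᵐ[μ] q)
    (hpq : ∀ᵐ z ∂μ, q z = 0 → p z = 0) :
    ∀ᵐ z ∂μ, p z * log (r z) ≤ p z * log (p z / q z) - (p z - q z * r z) := by
  filter_upwards [hp0, hq0, hpq, h.nonneg, h.eq_zero] with z hp hq hqp hr hrp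
  have hlog := sub_le_mul_log_div hp (mul_nonneg hq hr) fun h0 => (mul_eq_zero.1 h0).elim hqp hrp
  have hsplit : p z * log (p z / (q z * r z)) = p z * log (p z / q z) - p z * log (r z) := by
    by_cases hpz : p z = 0
    · simp [hpz]
    · rw [← div_div, log_div (div_ne_zero hpz fun h0 => hpz (hqp h0)) fun h0 => hpz (hrp h0),
        mul_sub]
  linarith

lemma integrable_mul_log (h : IsCoarseRatio μ p q r) (hp0 : 0 ≤ᵐ[μ] p) (hp : Integrable p μ)
    (hq0 : 0 ≤ᵐ[μ] q) (hpq : ∀ᵐ z ∂μ, q z = 0 → p z = 0)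
    (hKL : Integrable (fun z => p z * log (p z / q z)) μ) :
    Integrable (fun z => p z * log (r z)) μ :=
  integrable_of_le_of_le
    (hp.aestronglyMeasurable.mul h.aestronglyMeasurable.aemeasurable.log.aestronglyMeasurable)
    (h.ae_sub_div_le_mul_log hp0) (h.ae_mul_log_le hp0 hq0 hpq)
    (hp.sub h.integrable_div) (hKL.sub (hp.sub h.integrable_mul))

lemma integral_sub_integral_le_integral_mul_log (h : IsCoarseRatio μ p q r) (hp0 : 0 ≤ᵐ[μ] p)
    (hp : Integrable p μ) (hlog : Integrable (fun z => p z * log (r z)) μ) :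
    (∫ z, p z ∂μ) - ∫ z, q z ∂μ ≤ ∫ z, p z * log (r z) ∂μ :=
  calc (∫ z, p z ∂μ) - ∫ z, q z ∂μ ≤ ∫ z, p z ∂μ - ∫ z, p z / r z ∂μ :=
        sub_le_sub_left h.integral_div_le _
    _ = ∫ z, (p z - p z / r z) ∂μ := (integral_sub hp h.integrable_div).symm
    _ ≤ ∫ z, p z * log (r z) ∂μ :=
        integral_mono_ae (hp.sub h.integrable_div) hlog (h.ae_sub_div_le_mul_log hp0)

lemma integral_mul_log_le (h : IsCoarseRatio μ p q r) (hp0 : 0 ≤ᵐ[μ] p) (hp : Integrable p μ)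
    (hq0 : 0 ≤ᵐ[μ] q) (hpq : ∀ᵐ z ∂μ, q z = 0 → p z = 0)
    (hKL : Integrable (fun z => p z * log (p z / q z)) μ) :
    ∫ z, p z * log (r z) ∂μ ≤ ∫ z, p z * log (p z / q z) ∂μ :=
  calc ∫ z, p z * log (r z) ∂μ ≤ ∫ z, (p z * log (p z / q z) - (p z - q z * r z)) ∂μ :=
        integral_mono_ae (h.integrable_mul_log hp0 hp hq0 hpq hKL)
          (hKL.sub (hp.sub h.integrable_mul)) (h.ae_mul_log_le hp0 hq0 hpq)
    _ = ∫ z, p z * log (p z / q z) ∂μ - (∫ z, p z ∂μ - ∫ z, q z * r z ∂μ) := by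
        rw [integral_sub hKL (hp.sub' h.integrable_mul), integral_sub hp h.integrable_mul]
    _ ≤ ∫ z, p z * log (p z / q z) ∂μ := sub_le_self _ (sub_nonneg.2 h.integral_mul_le)

end IsCoarseRatio

end CoarseRatio

section Marginal

variable {α β : Type*} [MeasurableSpace α] [MeasurableSpace β]
  {μ : Measure α} {ν : Measure β}

/-- The density, with respect to the first factor, of the first marginal of the measure with density
`f` on a product space whose second factor carries `ν`. -/
noncomputable def fstMarginal (ν : Measure β) (f : α × β → ℝ) (x : α) : ℝ :=
  ∫ y, f (x, y) ∂ν

/-- The density, with respect to the second factor, of the second marginal of the measure with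
density `f` on a product space whose first factor carries `μ`. -/
noncomputable def sndMarginal (μ : Measure α) (f : α × β → ℝ) (y : β) : ℝ :=
  ∫ x, f (x, y) ∂μ

variable [SFinite ν] {f p q : α × β → ℝ} {g w : α → ℝ}

lemma integrable_fstMarginal (hf : Integrable f (μ.prod ν)) : Integrable (fstMarginal ν f) μ :=
  hf.integral_prod_left

lemma fstMarginal_nonneg (hf0 : 0 ≤ᵐ[μ.prod ν] f) : 0 ≤ᵐ[μ] fstMarginal ν f := by
  filter_upwards [Measure.ae_ae_of_ae_prod hf0] with x hx using integral_nonneg_of_ae hx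

lemma integrable_fstMarginal_mul_div (hf : Integrable f (μ.prod ν)) (hg : Integrable g μ) :
    Integrable (fun x => fstMarginal ν f x * (g x / fstMarginal ν f x)) μ := by
  have hfX := (integrable_fstMarginal hf).aestronglyMeasurable
  refine hg.mono (hfX.mul (hg.aestronglyMeasurable.div₀ hfX)) (.of_forall fun x => ?_)
  rcases eq_or_ne (fstMarginal ν f x) 0 with h | h
  · simp [h]
  · rw [mul_div_cancel₀ _ h]

variable [SFinite μ]

lemma integral_fstMarginal (hf : Integrable f (μ.prod ν)) :
    ∫ x, fstMarginal ν f x ∂μ = ∫ z, f z ∂μ.prod ν :=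
  (integral_prod f hf).symm

lemma integrable_mul_comp_fst (hf0 : 0 ≤ᵐ[μ.prod ν] f) (hf : Integrable f (μ.prod ν))
    (hw : AEStronglyMeasurable w μ) (hfw : Integrable (fun x => fstMarginal ν f x * w x) μ) :
    Integrable (fun z => f z * w z.1) (μ.prod ν) := by
  refine (integrable_prod_iff (hf.aestronglyMeasurable.mul hw.comp_fst)).2
    ⟨hf.prod_right_ae.mono fun x hx => hx.mul_const (w x), hfw.norm.congr ?_⟩
  filter_upwards [Measure.ae_ae_of_ae_prod hf0, fstMarginal_nonneg hf0] with x hx hfx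
  calc ‖fstMarginal ν f x * w x‖ = (∫ y, f (x, y) ∂ν) * ‖w x‖ := by
        rw [norm_mul, norm_of_nonneg hfx, fstMarginal]
    _ = ∫ y, f (x, y) * ‖w x‖ ∂ν := (integral_mul_const _ _).symm
    _ = ∫ y, ‖f (x, y) * w x‖ ∂ν :=
        integral_congr_ae (hx.mono fun y hy => by simp only [norm_mul, norm_of_nonneg hy])

lemma integral_mul_comp_fst (hf0 : 0 ≤ᵐ[μ.prod ν] f) (hf : Integrable f (μ.prod ν))
    (hw : AEStronglyMeasurable w μ) (hfw : Integrable (fun x => fstMarginal ν f x * w x) μ) :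
    ∫ z, f z * w z.1 ∂μ.prod ν = ∫ x, fstMarginal ν f x * w x ∂μ := by
  simp only [integral_prod _ (integrable_mul_comp_fst hf0 hf hw hfw), integral_mul_const,
    fstMarginal]

lemma ae_eq_zero_of_fstMarginal_eq_zero (hf0 : 0 ≤ᵐ[μ.prod ν] f) (hf : Integrable f (μ.prod ν)) :
    ∀ᵐ z ∂μ.prod ν, fstMarginal ν f z.1 = 0 → f z = 0 := by
  -- With `0 / 0 = 0`, `w` is the indicator of the zero set of the marginal.
  let w : α → ℝ := fun x => 1 - fstMarginal ν f x / fstMarginal ν f x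
  have hfX := (integrable_fstMarginal hf).aestronglyMeasurable
  have hw : AEStronglyMeasurable w μ := aestronglyMeasurable_const.sub (hfX.div₀ hfX)
  have hw0 (x : α) : 0 ≤ w x := sub_nonneg.2 (div_self_le_one _)
  have hfXw : (fun x => fstMarginal ν f x * w x) = 0 := by
    funext x
    simp only [w, mul_sub, mul_one, mul_div_cancel_of_imp' id, sub_self, Pi.zero_apply]
  have hfw : Integrable (fun x => fstMarginal ν f x * w x) μ := by
    rw [hfXw]; exact integrable_zero _ _ _
  have hint : ∫ z, f z * w z.1 ∂μ.prod ν = 0 := by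
    rw [integral_mul_comp_fst hf0 hf hw hfw, hfXw]; exact integral_zero _ _
  have hzero := (integral_eq_zero_iff_of_nonneg_ae
    (hf0.mono fun z hz => mul_nonneg hz (hw0 z.1)) (integrable_mul_comp_fst hf0 hf hw hfw)).1 hint
  filter_upwards [hzero] with z hz hfz
  simpa [w, hfz] using hz

lemma integrable_mul_div_fstMarginal (hf0 : 0 ≤ᵐ[μ.prod ν] f) (hf : Integrable f (μ.prod ν))
    (hg : Integrable g μ) :
    Integrable (fun z => f z * (g z.1 / fstMarginal ν f z.1)) (μ.prod ν) :=
  integrable_mul_comp_fst hf0 hf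
    (hg.aestronglyMeasurable.div₀ (integrable_fstMarginal hf).aestronglyMeasurable)
    (integrable_fstMarginal_mul_div hf hg)

lemma integral_mul_div_fstMarginal_le (hf0 : 0 ≤ᵐ[μ.prod ν] f) (hf : Integrable f (μ.prod ν))
    (hg0 : 0 ≤ᵐ[μ] g) (hg : Integrable g μ) :
    ∫ z, f z * (g z.1 / fstMarginal ν f z.1) ∂μ.prod ν ≤ ∫ x, g x ∂μ := by
  have hfg := integrable_fstMarginal_mul_div hf hg
  rw [integral_mul_comp_fst (w := fun x => g x / fstMarginal ν f x) hf0 hf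
    (hg.aestronglyMeasurable.div₀ (integrable_fstMarginal hf).aestronglyMeasurable) hfg]
  refine integral_mono_ae hfg hg (hg0.mono fun x hx => ?_)
  rcases eq_or_ne (fstMarginal ν f x) 0 with h | h
  · simpa [h] using hx
  · exact (mul_div_cancel₀ _ h).le

lemma isCoarseRatio_fstMarginal (hp0 : 0 ≤ᵐ[μ.prod ν] p) (hp : Integrable p (μ.prod ν))
    (hq0 : 0 ≤ᵐ[μ.prod ν] q) (hq : Integrable q (μ.prod ν))
    (hpq : ∀ᵐ z ∂μ.prod ν, q z = 0 → p z = 0) :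
    IsCoarseRatio (μ.prod ν) p q fun z => fstMarginal ν p z.1 / fstMarginal ν q z.1 where
  aestronglyMeasurable := ((integrable_fstMarginal hp).aestronglyMeasurable.div₀
    (integrable_fstMarginal hq).aestronglyMeasurable).comp_fst
  nonneg := by
    filter_upwards [Measure.quasiMeasurePreserving_fst.ae (fstMarginal_nonneg hp0),
      Measure.quasiMeasurePreserving_fst.ae (fstMarginal_nonneg hq0)] with z using div_nonneg
  eq_zero := by
    filter_upwards [hpq, ae_eq_zero_of_fstMarginal_eq_zero hp0 hp,
      ae_eq_zero_of_fstMarginal_eq_zero hq0 hq] with z hz hpz hqz h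
    exact (div_eq_zero_iff.1 h).elim hpz fun h0 => hz (hqz h0)
  integrable_mul := integrable_mul_div_fstMarginal hq0 hq (integrable_fstMarginal hp)
  integral_mul_le := integral_fstMarginal hp ▸
    integral_mul_div_fstMarginal_le hq0 hq (fstMarginal_nonneg hp0) (integrable_fstMarginal hp)
  integrable_div := by
    simpa only [div_div_eq_mul_div, mul_div_assoc] using
      integrable_mul_div_fstMarginal hp0 hp (integrable_fstMarginal hq)
  integral_div_le := by
    simpa only [div_div_eq_mul_div, mul_div_assoc, integral_fstMarginal hq] using
      integral_mul_div_fstMarginal_le hp0 hp (fstMarginal_nonneg hq0) (integrable_fstMarginal hq)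

lemma isCoarseRatio_sndMarginal (hp0 : 0 ≤ᵐ[μ.prod ν] p) (hp : Integrable p (μ.prod ν))
    (hq0 : 0 ≤ᵐ[μ.prod ν] q) (hq : Integrable q (μ.prod ν))
    (hpq : ∀ᵐ z ∂μ.prod ν, q z = 0 → p z = 0) :
    IsCoarseRatio (μ.prod ν) p q fun z => sndMarginal μ p z.2 / sndMarginal μ q z.2 :=
  have hswap : Measure.QuasiMeasurePreserving Prod.swap (ν.prod μ) (μ.prod ν) :=
    Measure.measurePreserving_swap.quasiMeasurePreserving
  (isCoarseRatio_fstMarginal (hswap.ae hp0) hp.swap (hswap.ae hq0) hq.swap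
    (hswap.ae hpq)).comp_measurableEquiv .prodComm Measure.measurePreserving_swap

theorem mutual_information_proposal_bound_general
    (hp0 : 0 ≤ᵐ[μ.prod ν] p) (hp : Integrable p (μ.prod ν))
    (hq0 : 0 ≤ᵐ[μ.prod ν] q) (hq : Integrable q (μ.prod ν))
    (hmass : ∫ z, q z ∂μ.prod ν ≤ ∫ z, p z ∂μ.prod ν)
    (hpq : ∀ᵐ z ∂μ.prod ν, q z = 0 → p z = 0)
    (hI : Integrable (fun z => p z * log (p z / (fstMarginal ν p z.1 * sndMarginal μ p z.2)))
      (μ.prod ν))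
    (hKL : Integrable (fun z => p z * log (p z / q z)) (μ.prod ν)) :
    Integrable (fun z => p z * log (q z / (fstMarginal ν q z.1 * sndMarginal μ q z.2)))
        (μ.prod ν) ∧
      |(∫ z, p z * log (p z / (fstMarginal ν p z.1 * sndMarginal μ p z.2)) ∂μ.prod ν)
          - ∫ z, p z * log (q z / (fstMarginal ν q z.1 * sndMarginal μ q z.2)) ∂μ.prod ν|
        ≤ ∫ z, p z * log (p z / q z) ∂μ.prod ν := by
  have hX := isCoarseRatio_fstMarginal hp0 hp hq0 hq hpq
  have hY := isCoarseRatio_sndMarginal hp0 hp hq0 hq hpq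
  have hA := hX.integrable_mul_log hp0 hp hq0 hpq hKL
  have hB := hY.integrable_mul_log hp0 hp hq0 hpq hKL
  have hsplit : ∀ᵐ z ∂μ.prod ν,
      p z * log (p z / (fstMarginal ν p z.1 * sndMarginal μ p z.2))
          - p z * log (q z / (fstMarginal ν q z.1 * sndMarginal μ q z.2)) =
        p z * log (p z / q z) - p z * log (fstMarginal ν p z.1 / fstMarginal ν q z.1)
          - p z * log (sndMarginal μ p z.2 / sndMarginal μ q z.2) := by
    filter_upwards [hpq, hX.eq_zero, hY.eq_zero] with z
      using mul_log_div_mul_sub_mul_log_div_mul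
  have hIq : Integrable
      (fun z => p z * log (q z / (fstMarginal ν q z.1 * sndMarginal μ q z.2))) (μ.prod ν) :=
    (hI.sub ((hKL.sub hA).sub hB)).congr <| hsplit.mono fun z hz => by
      simp only [Pi.sub_apply]; linarith
  refine ⟨hIq, ?_⟩
  rw [← integral_sub hI hIq, integral_congr_ae hsplit, integral_sub (hKL.sub' hA) hB,
    integral_sub hKL hA, abs_le]
  have hA0 := hX.integral_sub_integral_le_integral_mul_log hp0 hp hA
  have hB0 := hY.integral_sub_integral_le_integral_mul_log hp0 hp hB
  have hAK := hX.integral_mul_log_le hp0 hp hq0 hpq hKL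
  have hBK := hY.integral_mul_log_le hp0 hp hq0 hpq hKL
  constructor <;> linarith

end Marginal

/-- Let `(ξ, η)` be an absolutely continuous pair of random vectors with
joint density `p` and marginals `pX`, `pY`, and let `q` be another density on the same
space with marginals `qX`, `qY`.  Then

`|I(ξ; η) − I_q(ξ; η)| ≤ D_KL(p ‖ q)`,

where `I(ξ; η) = E_p[log (p(ξ,η) / (pX ξ * pY η))]`,
`I_q(ξ; η) = E_p[log (q(ξ,η) / (qX ξ * qY η))]` and
`D_KL(p ‖ q) = E_p[log (p/q)]`. -/
theorem mutual_information_proposal_bound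
    (n m : ℕ)
    -- joint density p of (ξ, η) and its marginals
    (p : (Fin n → ℝ) × (Fin m → ℝ) → ℝ)
    (hp_meas : Measurable p)
    (hp_nonneg : ∀ z, 0 ≤ p z)
    (hp_int : ∫ z, p z = 1)
    (pX : (Fin n → ℝ) → ℝ) (hpX : ∀ x, pX x = ∫ y, p (x, y))
    (pY : (Fin m → ℝ) → ℝ) (hpY : ∀ y, pY y = ∫ x, p (x, y))
    -- proposal density q and its marginals (assumed everywhere positive,
    -- so that all the Kullback–Leibler divergences are finite)
    (q : (Fin n → ℝ) × (Fin m → ℝ) → ℝ)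
    (hq_meas : Measurable q)
    (hq_pos : ∀ z, 0 < q z)
    (hq_int : ∫ z, q z = 1)
    (qX : (Fin n → ℝ) → ℝ) (hqX : ∀ x, qX x = ∫ y, q (x, y))
    (qY : (Fin m → ℝ) → ℝ) (hqY : ∀ y, qY y = ∫ x, q (x, y))
    (hqX_pos : ∀ x, 0 < qX x) (hqY_pos : ∀ y, 0 < qY y)
    -- on the support of p the marginal densities of p are positive (holds a.e.)
    (hp_supp : ∀ᵐ z : (Fin n → ℝ) × (Fin m → ℝ) ∂volume,
      0 < p z → 0 < pX z.1 ∧ 0 < pY z.2)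
    -- integrability of all the integrands involved
    (h_int_I : Integrable fun z : (Fin n → ℝ) × (Fin m → ℝ) =>
      p z * Real.log (p z / (pX z.1 * pY z.2)))
    (h_int_Iq : Integrable fun z : (Fin n → ℝ) × (Fin m → ℝ) =>
      p z * Real.log (q z / (qX z.1 * qY z.2)))
    (h_int_KL : Integrable fun z : (Fin n → ℝ) × (Fin m → ℝ) =>
      p z * Real.log (p z / q z))
    (h_int_KLm : Integrable fun z : (Fin n → ℝ) × (Fin m → ℝ) =>
      pX z.1 * pY z.2 * Real.log ((pX z.1 * pY z.2) / (qX z.1 * qY z.2)))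
    (h_int_mX : Integrable fun z : (Fin n → ℝ) × (Fin m → ℝ) =>
      p z * Real.log (pX z.1 / qX z.1))
    (h_int_mY : Integrable fun z : (Fin n → ℝ) × (Fin m → ℝ) =>
      p z * Real.log (pY z.2 / qY z.2)) :
    -- |I(ξ; η) − I_q(ξ; η)| ≤ D_KL(p_{ξ,η} ‖ q_{ξ,η})
    |(∫ z : (Fin n → ℝ) × (Fin m → ℝ), p z * Real.log (p z / (pX z.1 * pY z.2)))
        - ∫ z : (Fin n → ℝ) × (Fin m → ℝ), p z * Real.log (q z / (qX z.1 * qY z.2))|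
      ≤ ∫ z : (Fin n → ℝ) × (Fin m → ℝ), p z * Real.log (p z / q z) := by
  obtain rfl : pX = fstMarginal volume p := funext hpX
  obtain rfl : pY = sndMarginal volume p := funext hpY
  obtain rfl : qX = fstMarginal volume q := funext hqX
  obtain rfl : qY = sndMarginal volume q := funext hqY
  exact (mutual_information_proposal_bound_general (.of_forall hp_nonneg)
    (.of_integral_ne_zero (hp_int.trans_ne one_ne_zero)) (.of_forall fun z => (hq_pos z).le)
    (.of_integral_ne_zero (hq_int.trans_ne one_ne_zero)) (hq_int.trans hp_int.symm).le
    (.of_forall fun z h => absurd h (hq_pos z).ne') h_int_I h_int_KL).2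
end

section
/- Let (ξ, η) be an absolutely continuous pair of random vectors with joint density p_{ξ,η}, mean m, and non-singular covariance matrix Σ with diagonal blocks Σ_{ξξ} = Cov(ξ) and Σ_{ηη} = Cov(η). Then |I(ξ; η) − (1/2)[log det Σ_{ξξ} + log det Σ_{ηη} − log det Σ]| ≤ D_KL(p_{ξ,η} ‖ N(m, Σ)). -/
open MeasureTheory Matrix Real

/-- The probability density function of the multivariate Gaussian distribution `N(m, S)`
on `ι → ℝ` with mean `m` and (positive-definite) covariance matrix `S`. -/
noncomputable def gaussianPdf {ι : Type*} [Fintype ι] [DecidableEq ι]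
    (m : ι → ℝ) (S : Matrix ι ι ℝ) (x : ι → ℝ) : ℝ :=
  (Real.sqrt ((2 * Real.pi) ^ (Fintype.card ι) * S.det))⁻¹ *
    Real.exp (-(1 / 2 : ℝ) * ((x - m) ⬝ᵥ S⁻¹.mulVec (x - m)))

/-!
Write `g = N(m, S)` and let `K = D_KL(p ‖ g)`. The marginals of `g` are Gaussian with the diagonal
blocks of `S` as covariances; let `K_ξ` and `K_η` be the relative entropies of the marginals of `p`
with respect to them. The logarithm of a Gaussian density is a quadratic polynomial, so its
expectation under `p` depends only on the second moments, which `p` shares with `g`. Expanding the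
logarithm in `I(ξ; η)` therefore gives
`I(ξ; η) - (1 / 2) (log det S_ξξ + log det S_ηη - log det S) = K - K_ξ - K_η`.
By the data processing inequality `0 ≤ K_ξ, K_η ≤ K`, so the right-hand side lies in `[-K, K]`.
-/

open ProbabilityTheory InformationTheory WithLp
open scoped ENNReal MatrixOrder RealInnerProductSpace

/-- `P` has density `f` with respect to `μ`. This is the real-valued counterpart of
`P = μ.withDensity f`; as `ENNReal.ofReal` truncates negative values to `0`, nonnegativity of `f` is
part of the definition. -/
structure HasRealDensity {α : Type*} [MeasurableSpace α] (P μ : Measure α) (f : α → ℝ) : Prop where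
  measurable : Measurable f
  nonneg : 0 ≤ f
  eq_withDensity : P = μ.withDensity fun x ↦ ENNReal.ofReal (f x)

namespace HasRealDensity

variable {α : Type*} [MeasurableSpace α] {P G μ : Measure α} {f g : α → ℝ}

theorem ae_pos (hf : HasRealDensity P μ f) : ∀ᵐ x ∂P, 0 < f x := by
  have := hf.measurable
  rw [hf.eq_withDensity, ae_withDensity_iff (by fun_prop)]
  exact .of_forall fun x hx ↦ by simpa using hx

theorem integral_eq (hf : HasRealDensity P μ f) (h : α → ℝ) :
    ∫ x, h x ∂P = ∫ x, f x * h x ∂μ := by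
  have := hf.measurable
  rw [hf.eq_withDensity, integral_withDensity_eq_integral_toReal_smul (by fun_prop) (by simp)]
  simp [ENNReal.toReal_ofReal (hf.nonneg _)]

theorem integrable_iff (hf : HasRealDensity P μ f) {h : α → ℝ} :
    Integrable h P ↔ Integrable (fun x ↦ f x * h x) μ := by
  have := hf.measurable
  rw [hf.eq_withDensity, integrable_withDensity_iff_integrable_smul' (by fun_prop) (by simp)]
  simp [ENNReal.toReal_ofReal (hf.nonneg _)]

theorem isProbabilityMeasure (hf : HasRealDensity P μ f) (hf1 : ∫ x, f x ∂μ = 1) :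
    IsProbabilityMeasure P := by
  refine ⟨?_⟩
  rw [hf.eq_withDensity, withDensity_apply _ .univ, Measure.restrict_univ,
    ← ofReal_integral_eq_lintegral_ofReal (integrable_of_integral_eq_one hf1)
      (.of_forall hf.nonneg), hf1, ENNReal.ofReal_one]

theorem div_of_pos (hf : HasRealDensity P μ f) (hg : HasRealDensity G μ g) (hg0 : ∀ x, 0 < g x) :
    HasRealDensity P G fun x ↦ f x / g x where
  measurable := hf.measurable.div hg.measurable
  nonneg x := div_nonneg (hf.nonneg x) (hg.nonneg x)
  eq_withDensity := by
    have := hf.measurable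
    have := hg.measurable
    rw [hg.eq_withDensity, ← withDensity_mul _ (by fun_prop) (by fun_prop), hf.eq_withDensity]
    congr with x
    rw [Pi.mul_apply, ← ENNReal.ofReal_mul (hg0 x).le, mul_div_cancel₀ _ (hg0 x).ne']

theorem absolutelyContinuous (hf : HasRealDensity P μ f) : P ≪ μ := by
  rw [hf.eq_withDensity]
  exact withDensity_absolutelyContinuous _ _

theorem llr_ae_eq_log [SigmaFinite μ] (hf : HasRealDensity P μ f) :
    llr P μ =ᵐ[P] fun x ↦ log (f x) := by
  have := hf.measurable
  refine hf.absolutelyContinuous.ae_eq ?_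
  have hrn := Measure.rnDeriv_withDensity μ (f := fun x ↦ ENNReal.ofReal (f x)) (by fun_prop)
  rw [← hf.eq_withDensity] at hrn
  filter_upwards [hrn] with x hx
  rw [llr, hx, ENNReal.toReal_ofReal (hf.nonneg x)]

end HasRealDensity

section DataProcessing

variable {α β : Type*} [MeasurableSpace α] [MeasurableSpace β] {P G : Measure α}
  {f : α → ℝ} {h : β → ℝ} {φ : α → β}

theorem integrable_log_comp_of_integrable_log [IsFiniteMeasure P] [IsFiniteMeasure G]
    (hφ : Measurable φ) (hf : HasRealDensity P G f)
    (hh : HasRealDensity (P.map φ) (G.map φ) h) (hint : Integrable (fun x ↦ log (f x)) P) :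
    Integrable (fun x ↦ log (h (φ x))) P := by
  have hllr := integrable_llr_map hf.absolutelyContinuous hφ
    ((integrable_congr hf.llr_ae_eq_log).mpr hint)
  exact ((integrable_congr hh.llr_ae_eq_log).mp hllr).comp_measurable hφ

theorem integral_log_comp_mem_Icc [IsProbabilityMeasure P] [IsProbabilityMeasure G]
    (hφ : Measurable φ) (hf : HasRealDensity P G f)
    (hh : HasRealDensity (P.map φ) (G.map φ) h) (hint : Integrable (fun x ↦ log (f x)) P) :
    ∫ x, log (h (φ x)) ∂P ∈ Set.Icc 0 (∫ x, log (f x) ∂P) := by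
  have := Measure.isProbabilityMeasure_map (μ := P) hφ.aemeasurable
  have := Measure.isProbabilityMeasure_map (μ := G) hφ.aemeasurable
  have hPG := hf.absolutelyContinuous
  have hlog : Measurable fun y ↦ log (h y) := hh.measurable.log
  have hK : (klDiv P G).toReal = ∫ x, log (f x) ∂P := by
    rw [toReal_klDiv_of_measure_eq hPG (by simp), integral_congr_ae hf.llr_ae_eq_log]
  have hKφ : (klDiv (P.map φ) (G.map φ)).toReal = ∫ x, log (h (φ x)) ∂P := by
    rw [toReal_klDiv_of_measure_eq (hPG.map hφ) (by simp), integral_congr_ae hh.llr_ae_eq_log,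
      integral_map hφ.aemeasurable hlog.aestronglyMeasurable]
  rw [← hK, ← hKφ]
  exact ⟨ENNReal.toReal_nonneg, ENNReal.toReal_mono
    (klDiv_ne_top hPG ((integrable_congr hf.llr_ae_eq_log).mpr hint)) (klDiv_map_le P G hφ)⟩

end DataProcessing

section Marginal

theorem map_withDensity_comp {α β : Type*} [MeasurableSpace α] [MeasurableSpace β] {μ : Measure α}
    {T : α → β} (hT : Measurable T) {f : β → ℝ≥0∞} (hf : Measurable f) :
    (μ.withDensity (f ∘ T)).map T = (μ.map T).withDensity f := by
  ext s hs
  rw [Measure.map_apply hT hs, withDensity_apply _ (hT hs), withDensity_apply _ hs,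
    setLIntegral_map hs hf hT]
  rfl

theorem HasRealDensity.map_measurableEquiv {α β : Type*} [MeasurableSpace α] [MeasurableSpace β]
    {P μ : Measure α} {ν : Measure β} {f : α → ℝ} (hf : HasRealDensity P μ f) {e : α ≃ᵐ β}
    (he : MeasurePreserving e μ ν) : HasRealDensity (P.map e) ν (f ∘ e.symm) where
  measurable := hf.measurable.comp e.symm.measurable
  nonneg y := hf.nonneg (e.symm y)
  eq_withDensity := by
    have := hf.measurable
    rw [← he.map_eq, ← map_withDensity_comp he.measurable (by fun_prop), hf.eq_withDensity]
    simp only [Function.comp_def, e.symm_apply_apply]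

section Prod

variable {α β : Type*} [MeasurableSpace α] [MeasurableSpace β] {μ : Measure α} {ν : Measure β}
  [SFinite μ] [SFinite ν] {ρ : Measure (α × β)} {f : α × β → ℝ}

theorem HasRealDensity.fst (hf : HasRealDensity ρ (μ.prod ν) f) (hint : Integrable f (μ.prod ν)) :
    HasRealDensity ρ.fst μ fun x ↦ ∫ y, f (x, y) ∂ν where
  measurable := hf.measurable.stronglyMeasurable.integral_prod_right'.measurable
  nonneg x := integral_nonneg fun y ↦ hf.nonneg (x, y)
  eq_withDensity := by
    ext s hs
    have hslice : ∀ᵐ x ∂μ.restrict s,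
        ENNReal.ofReal (∫ y, f (x, y) ∂ν) = ∫⁻ y, ENNReal.ofReal (f (x, y)) ∂ν := by
      filter_upwards [ae_restrict_of_ae hint.prod_right_ae] with x hx
      exact ofReal_integral_eq_lintegral_ofReal hx (.of_forall fun y ↦ hf.nonneg (x, y))
    rw [hf.eq_withDensity, Measure.fst_apply hs, withDensity_apply _ (measurable_fst hs),
      withDensity_apply _ hs, lintegral_congr_ae hslice, ← Set.prod_univ,
      setLIntegral_prod _ hint.aemeasurable.ennreal_ofReal.restrict, Measure.restrict_univ]

theorem HasRealDensity.snd (hf : HasRealDensity ρ (μ.prod ν) f) (hint : Integrable f (μ.prod ν)) :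
    HasRealDensity ρ.snd ν fun y ↦ ∫ x, f (x, y) ∂μ := by
  have hswap : HasRealDensity (ρ.map Prod.swap) (ν.prod μ) (f ∘ Prod.swap) :=
    hf.map_measurableEquiv (e := .prodComm) Measure.measurePreserving_swap
  rw [← Measure.fst_map_swap]
  exact hswap.fst hint.swap

end Prod

section Sum

theorem sumPiEquivProdPi_symm_eq_sumElim {ι κ : Type*} :
    ⇑(MeasurableEquiv.sumPiEquivProdPi fun _ : ι ⊕ κ ↦ ℝ).symm = fun w ↦ Sum.elim w.1 w.2 := by
  ext w k
  cases k <;> rfl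

variable {ι κ : Type*} [Fintype ι] [Fintype κ] {P : Measure (ι ⊕ κ → ℝ)} {p : (ι ⊕ κ → ℝ) → ℝ}

theorem HasRealDensity.map_comp_inl (hp : HasRealDensity P volume p) (hint : Integrable p) :
    HasRealDensity (P.map (· ∘ Sum.inl)) volume fun x ↦ ∫ y, p (Sum.elim x y) := by
  have hT := volume_measurePreserving_sumPiEquivProdPi fun _ : ι ⊕ κ ↦ ℝ
  have hfst := (hp.map_measurableEquiv hT).fst (hT.symm.integrable_comp_of_integrable hint)
  rw [Measure.fst, Measure.map_map measurable_fst hT.measurable,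
    sumPiEquivProdPi_symm_eq_sumElim] at hfst
  exact hfst

theorem HasRealDensity.map_comp_inr (hp : HasRealDensity P volume p) (hint : Integrable p) :
    HasRealDensity (P.map (· ∘ Sum.inr)) volume fun y ↦ ∫ x, p (Sum.elim x y) := by
  have hT := volume_measurePreserving_sumPiEquivProdPi fun _ : ι ⊕ κ ↦ ℝ
  have hsnd := (hp.map_measurableEquiv hT).snd (hT.symm.integrable_comp_of_integrable hint)
  rw [Measure.snd, Measure.map_map measurable_snd hT.measurable,
    sumPiEquivProdPi_symm_eq_sumElim] at hsnd
  exact hsnd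

end Sum

end Marginal

theorem pi_withDensity_ofReal {ι : Type*} [Fintype ι] {α : ι → Type*}
    [∀ i, MeasurableSpace (α i)] {μ : ∀ i, Measure (α i)} [∀ i, SigmaFinite (μ i)]
    {f : ∀ i, α i → ℝ} (hf : ∀ i, Integrable (f i) (μ i)) (hf0 : ∀ i, 0 ≤ f i) :
    Measure.pi (fun i ↦ (μ i).withDensity fun x ↦ ENNReal.ofReal (f i x)) =
      (Measure.pi μ).withDensity fun x ↦ ENNReal.ofReal (∏ i, f i (x i)) := by
  refine Measure.pi_eq fun s hs ↦ ?_
  simp_rw [withDensity_apply _ (MeasurableSet.univ_pi hs), withDensity_apply _ (hs _),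
    Measure.restrict_pi_pi]
  rw [← ofReal_integral_eq_lintegral_ofReal (.fintype_prod_dep fun i ↦ (hf i).restrict)
    (.of_forall fun x ↦ Finset.prod_nonneg fun i _ ↦ hf0 i (x i)),
    integral_fintype_prod_eq_prod, ENNReal.ofReal_prod_of_nonneg fun i _ ↦ integral_nonneg (hf0 i)]
  exact Finset.prod_congr rfl fun i _ ↦
    ofReal_integral_eq_lintegral_ofReal (hf i).restrict (.of_forall (hf0 i))

section Gaussian

variable {ι : Type*} [Fintype ι] [DecidableEq ι]

@[fun_prop]
theorem continuous_gaussianPdf (m : ι → ℝ) (S : Matrix ι ι ℝ) : Continuous (gaussianPdf m S) := by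
  unfold gaussianPdf dotProduct mulVec dotProduct
  fun_prop

theorem gaussianPdf_pos (m : ι → ℝ) {S : Matrix ι ι ℝ} (hS : S.PosDef) (x : ι → ℝ) :
    0 < gaussianPdf m S x := by
  have := hS.det_pos
  unfold gaussianPdf
  positivity

theorem log_gaussianPdf (m : ι → ℝ) {S : Matrix ι ι ℝ} (hS : S.PosDef) (x : ι → ℝ) :
    log (gaussianPdf m S x) = -(1 / 2 : ℝ) * (Fintype.card ι * log (2 * π) + log S.det) -
      (1 / 2 : ℝ) * ((x - m) ⬝ᵥ S⁻¹ *ᵥ (x - m)) := by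
  have := hS.det_pos
  rw [gaussianPdf, log_mul (by positivity) (by positivity), log_exp, log_inv,
    log_sqrt (by positivity), log_mul (by positivity) (by positivity), log_pow]
  ring

theorem gaussianPdf_zero_one (x : ι → ℝ) :
    gaussianPdf 0 1 x = ∏ i, gaussianPDFReal 0 1 (x i) := by
  have hsqrt : √((2 * π) ^ Fintype.card ι) = √(2 * π) ^ Fintype.card ι := by
    rw [sqrt_eq_iff_eq_sq (by positivity) (by positivity), pow_right_comm, sq_sqrt (by positivity)]
  have hexponent : -(1 / 2 : ℝ) * (x ⬝ᵥ x) = ∑ i, -(x i ^ 2) / 2 := by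
    rw [dotProduct, Finset.mul_sum]
    exact Finset.sum_congr rfl fun i _ ↦ by ring
  simp only [gaussianPdf, gaussianPDFReal, det_one, inv_one, one_mulVec, sub_zero, mul_one, hsqrt,
    hexponent, NNReal.coe_one, Finset.prod_mul_distrib, ← exp_sum, Finset.prod_const,
    Finset.card_univ, inv_pow]

theorem pi_gaussianReal_eq_withDensity :
    Measure.pi (fun _ : ι ↦ gaussianReal 0 1) =
      volume.withDensity fun x ↦ ENNReal.ofReal (gaussianPdf 0 1 x) := by
  simp_rw [gaussianReal_of_var_ne_zero 0 one_ne_zero, gaussianPDF_def, gaussianPdf_zero_one]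
  exact pi_withDensity_ofReal (fun _ ↦ integrable_gaussianPDFReal 0 1)
    fun _ ↦ gaussianPDFReal_nonneg 0 1

theorem gaussianPdf_mul_transpose (m : ι → ℝ) {A : Matrix ι ι ℝ} (hA : IsUnit A) (x : ι → ℝ) :
    gaussianPdf m (A * Aᵀ) (m + A *ᵥ x) = |A.det|⁻¹ * gaussianPdf 0 1 x := by
  have hA' := (isUnit_iff_isUnit_det A).mp hA
  have hquad : A *ᵥ x ⬝ᵥ (A * Aᵀ)⁻¹ *ᵥ (A *ᵥ x) = x ⬝ᵥ x := by
    rw [mulVec_mulVec, Matrix.mul_inv_rev, mul_assoc, nonsing_inv_mul A hA', mul_one,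
      ← vecMul_transpose, ← dotProduct_mulVec, mulVec_mulVec,
      mul_nonsing_inv Aᵀ (isUnit_det_transpose A hA'), one_mulVec]
  have hdet : √((2 * π) ^ Fintype.card ι * (A * Aᵀ).det) =
      |A.det| * √((2 * π) ^ Fintype.card ι) := by
    rw [det_mul, det_transpose, sqrt_mul (by positivity), sqrt_mul_self_eq_abs, mul_comm]
  simp only [gaussianPdf, add_sub_cancel_left, hquad, hdet, sub_zero, det_one, mul_one, inv_one,
    one_mulVec, _root_.mul_inv_rev]
  ring

theorem map_withDensity_gaussianPdf_zero_one (m : ι → ℝ) {A : Matrix ι ι ℝ} (hA : IsUnit A) :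
    (volume.withDensity fun x ↦ ENNReal.ofReal (gaussianPdf 0 1 x)).map (fun x ↦ m + A *ᵥ x) =
      volume.withDensity fun x ↦ ENNReal.ofReal (gaussianPdf m (A * Aᵀ) x) := by
  have hA' := (isUnit_iff_isUnit_det A).mp hA
  have hdet : A.det ≠ 0 := hA'.ne_zero
  have hdensity : (fun x ↦ ENNReal.ofReal (gaussianPdf 0 1 x)) =
      ENNReal.ofReal |A.det| •
        (fun y ↦ ENNReal.ofReal (gaussianPdf m (A * Aᵀ) y)) ∘ fun x ↦ m + A *ᵥ x := by
    ext x
    simp [gaussianPdf_mul_transpose m hA, ← ENNReal.ofReal_mul, hdet]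
  have hvolume : (volume : Measure (ι → ℝ)).map (fun x ↦ m + A *ᵥ x) =
      ENNReal.ofReal |A.det|⁻¹ • volume := by
    have hcomp : (fun x ↦ m + A *ᵥ x) = (m + ·) ∘ toLin' A := rfl
    rw [hcomp, ← Measure.map_map (by fun_prop) (by fun_prop),
      Real.map_matrix_volume_pi_eq_smul_volume_pi hdet, Measure.map_smul, map_add_left_eq_self,
      abs_inv]
  rw [hdensity, withDensity_smul, Measure.map_smul, map_withDensity_comp, hvolume,
    withDensity_smul_measure, smul_smul, ← ENNReal.ofReal_mul (abs_nonneg _),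
    mul_inv_cancel₀ (abs_ne_zero.mpr hdet), ENNReal.ofReal_one, one_smul]
  all_goals fun_prop

/-- The Gaussian law `N(m, S)` on `ι → ℝ`, the space on which `gaussianPdf` is defined; Mathlib's
`multivariateGaussian` lives on `EuclideanSpace ℝ ι` instead. As there, a matrix `S` that is not
positive semidefinite gives the Dirac mass at `m`. -/
noncomputable def gaussianMeasure (m : ι → ℝ) (S : Matrix ι ι ℝ) : Measure (ι → ℝ) :=
  (multivariateGaussian (toLp 2 m) S).map ofLp

instance (m : ι → ℝ) (S : Matrix ι ι ℝ) : IsProbabilityMeasure (gaussianMeasure m S) :=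
  Measure.isProbabilityMeasure_map (by fun_prop)

theorem gaussianMeasure_eq_withDensity (m : ι → ℝ) {S : Matrix ι ι ℝ} (hS : S.PosDef) :
    gaussianMeasure m S =
      volume.withDensity fun x ↦ ENNReal.ofReal (gaussianPdf m S x) := by
  have hS0 : 0 ≤ S := hS.posSemidef.nonneg
  set A := CFC.sqrt S
  have hAA : A * Aᵀ = S := by
    have hA : IsSelfAdjoint A := (CFC.sqrt_nonneg S).isSelfAdjoint
    rw [← conjTranspose_eq_transpose_of_trivial, ← star_eq_conjTranspose, hA.star_eq,
      CFC.sqrt_mul_sqrt_self S hS0]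
  have hA : IsUnit A := isUnit_of_mul_isUnit_left (hAA ▸ hS.isUnit)
  have hcomp : (ofLp ∘ fun x ↦ toLp 2 m + toEuclideanCLM (𝕜 := ℝ) A x) ∘ toLp 2 =
      fun x : ι → ℝ ↦ m + A *ᵥ x := by
    ext; simp
  rw [gaussianMeasure, multivariateGaussian, ← map_pi_eq_stdGaussian, Measure.map_map,
    Measure.map_map, hcomp, pi_gaussianReal_eq_withDensity,
    map_withDensity_gaussianPdf_zero_one m hA, hAA]
  all_goals fun_prop

theorem hasRealDensity_gaussianPdf (m : ι → ℝ) {S : Matrix ι ι ℝ} (hS : S.PosDef) :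
    HasRealDensity (gaussianMeasure m S) volume (gaussianPdf m S) where
  measurable := (continuous_gaussianPdf m S).measurable
  nonneg x := (gaussianPdf_pos m hS x).le
  eq_withDensity := gaussianMeasure_eq_withDensity m hS

theorem multivariateGaussian_map_mulVec {κ : Type*} [Fintype κ] [DecidableEq κ] (m : ι → ℝ)
    {S : Matrix ι ι ℝ} (hS : S.PosSemidef) (A : Matrix κ ι ℝ) :
    (multivariateGaussian (toLp 2 m) S).map (fun x ↦ toLp 2 (A *ᵥ ofLp x)) =
      multivariateGaussian (toLp 2 (A *ᵥ m)) (A * S * Aᵀ) := by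
  have hAS : (A * S * Aᵀ).PosSemidef := hS.mul_mul_conjTranspose_same A
  have hinner (x : ι → ℝ) (t : EuclideanSpace ℝ κ) :
      ⟪toLp 2 (A *ᵥ x), t⟫ = ⟪toLp 2 x, toLp 2 (Aᵀ *ᵥ ofLp t)⟫ := by
    simp [EuclideanSpace.inner_eq_star_dotProduct, dotProduct_mulVec, mulVec_transpose]
  have hquad (t : κ → ℝ) : Aᵀ *ᵥ t ⬝ᵥ S *ᵥ (Aᵀ *ᵥ t) = t ⬝ᵥ (A * S * Aᵀ) *ᵥ t := by
    rw [← mulVec_mulVec, ← mulVec_mulVec, dotProduct_mulVec t A, mulVec_transpose]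
  refine Measure.ext_of_charFun ?_
  ext t
  calc charFun ((multivariateGaussian (toLp 2 m) S).map fun x ↦ toLp 2 (A *ᵥ ofLp x)) t
      = charFun (multivariateGaussian (toLp 2 m) S) (toLp 2 (Aᵀ *ᵥ ofLp t)) := by
        rw [charFun_apply, integral_map (by fun_prop) (by fun_prop), charFun_apply]
        simp only [hinner]
    _ = charFun (multivariateGaussian (toLp 2 (A *ᵥ m)) (A * S * Aᵀ)) t := by
        rw [charFun_multivariateGaussian hS, charFun_multivariateGaussian hAS,
          real_inner_comm, ← hinner, real_inner_comm, hquad]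

theorem gaussianMeasure_map_mulVec {κ : Type*} [Fintype κ] [DecidableEq κ] (m : ι → ℝ)
    {S : Matrix ι ι ℝ} (hS : S.PosSemidef) (A : Matrix κ ι ℝ) :
    (gaussianMeasure m S).map (A *ᵥ ·) = gaussianMeasure (A *ᵥ m) (A * S * Aᵀ) := by
  have hcomp : (A *ᵥ ·) ∘ ofLp = ofLp ∘ fun x : EuclideanSpace ℝ ι ↦ toLp 2 (A *ᵥ ofLp x) := rfl
  rw [gaussianMeasure, gaussianMeasure, ← multivariateGaussian_map_mulVec m hS,
    Measure.map_map, Measure.map_map, hcomp]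
  all_goals fun_prop

theorem gaussianMeasure_map_comp {κ : Type*} [Fintype κ] [DecidableEq κ] (m : ι → ℝ)
    {S : Matrix ι ι ℝ} (hS : S.PosSemidef) (e : κ → ι) :
    (gaussianMeasure m S).map (· ∘ e) = gaussianMeasure (m ∘ e) (S.submatrix e e) := by
  set E : Matrix κ ι ℝ := (1 : Matrix ι ι ℝ).submatrix e id with hE
  have hEmul (x : ι → ℝ) : E *ᵥ x = x ∘ e := by
    ext; simp [hE, mulVec, dotProduct, one_apply]
  have hEcov : E * S * Eᵀ = S.submatrix e e := by
    ext; simp [hE, mul_apply, one_apply]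
  simpa only [hEmul, hEcov] using gaussianMeasure_map_mulVec m hS E

theorem hasRealDensity_gaussianMeasure_map_comp {κ : Type*} [Fintype κ] [DecidableEq κ]
    (m : ι → ℝ) {S : Matrix ι ι ℝ} (hS : S.PosDef) {e : κ → ι} (he : e.Injective) :
    HasRealDensity ((gaussianMeasure m S).map (· ∘ e)) volume
      (gaussianPdf (m ∘ e) (S.submatrix e e)) := by
  rw [gaussianMeasure_map_comp m hS.posSemidef]
  exact hasRealDensity_gaussianPdf _ (hS.submatrix he)

end Gaussian

section CrossEntropy

theorem dotProduct_mulVec_self_eq_sum {ι R : Type*} [Fintype ι] [CommSemiring R]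
    (M : Matrix ι ι R) (v : ι → R) : v ⬝ᵥ M *ᵥ v = ∑ i, ∑ j, M i j * (v i * v j) := by
  simp only [dotProduct, mulVec, Finset.mul_sum]
  exact Finset.sum_congr rfl fun i _ ↦ Finset.sum_congr rfl fun j _ ↦ mul_left_comm _ _ _

variable {Ω ι : Type*} [MeasurableSpace Ω] {P : Measure Ω} [Fintype ι] {X : Ω → ι → ℝ}
  {m : ι → ℝ} {S : Matrix ι ι ℝ}

theorem integrable_dotProduct_mulVec (M : Matrix ι ι ℝ)
    (hX : ∀ i j, Integrable (fun ω ↦ (X ω i - m i) * (X ω j - m j)) P) :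
    Integrable (fun ω ↦ (X ω - m) ⬝ᵥ M *ᵥ (X ω - m)) P := by
  simp_rw [dotProduct_mulVec_self_eq_sum]
  exact integrable_finsetSum _ fun i _ ↦ integrable_finsetSum _ fun j _ ↦ (hX i j).const_mul _

theorem integral_dotProduct_mulVec (M : Matrix ι ι ℝ)
    (hX : ∀ i j, Integrable (fun ω ↦ (X ω i - m i) * (X ω j - m j)) P)
    (hS : ∀ i j, ∫ ω, (X ω i - m i) * (X ω j - m j) ∂P = S i j) :
    ∫ ω, (X ω - m) ⬝ᵥ M *ᵥ (X ω - m) ∂P = (M * S).trace := by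
  simp_rw [dotProduct_mulVec_self_eq_sum, Pi.sub_apply]
  have hterm (i j : ι) : Integrable (fun ω ↦ M i j * ((X ω i - m i) * (X ω j - m j))) P :=
    (hX i j).const_mul _
  rw [integral_finsetSum _ fun i _ ↦ integrable_finsetSum _ fun j _ ↦ hterm i j]
  refine Finset.sum_congr rfl fun i _ ↦ ?_
  rw [integral_finsetSum _ fun j _ ↦ hterm i j]
  refine Finset.sum_congr rfl fun j _ ↦ ?_
  simp_rw [integral_const_mul, mul_comm (X _ i - m i), hS]

variable [DecidableEq ι] [IsProbabilityMeasure P]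

theorem integrable_log_gaussianPdf (hSpos : S.PosDef)
    (hX : ∀ i j, Integrable (fun ω ↦ (X ω i - m i) * (X ω j - m j)) P) :
    Integrable (fun ω ↦ log (gaussianPdf m S (X ω))) P := by
  simp_rw [log_gaussianPdf m hSpos]
  exact (integrable_const _).sub ((integrable_dotProduct_mulVec _ hX).const_mul _)

theorem integral_log_gaussianPdf (hSpos : S.PosDef)
    (hX : ∀ i j, Integrable (fun ω ↦ (X ω i - m i) * (X ω j - m j)) P)
    (hS : ∀ i j, ∫ ω, (X ω i - m i) * (X ω j - m j) ∂P = S i j) :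
    ∫ ω, log (gaussianPdf m S (X ω)) ∂P =
      -(1 / 2 : ℝ) * (Fintype.card ι * (log (2 * π) + 1) + log S.det) := by
  simp_rw [log_gaussianPdf m hSpos]
  rw [integral_sub (integrable_const _) ((integrable_dotProduct_mulVec _ hX).const_mul _),
    integral_const, integral_const_mul, integral_dotProduct_mulVec _ hX hS,
    nonsing_inv_mul S hSpos.det_pos.ne'.isUnit, trace_one]
  simp only [probReal_univ, one_smul]
  ring

end CrossEntropy

section MutualInformation

variable {Ω α β : Type*} [MeasurableSpace Ω] [MeasurableSpace α] [MeasurableSpace β]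
  {P G μ : Measure Ω} {μX : Measure α} {μY : Measure β} {X : Ω → α} {Y : Ω → β}
  {p g : Ω → ℝ} {pX gX : α → ℝ} {pY gY : β → ℝ}

theorem log_div_mul_ae_eq (hX : Measurable X) (hY : Measurable Y) (hp : HasRealDensity P μ p)
    (hpX : HasRealDensity (P.map X) μX pX) (hpY : HasRealDensity (P.map Y) μY pY)
    (hg0 : ∀ ω, 0 < g ω) (hgX0 : ∀ x, 0 < gX x) (hgY0 : ∀ y, 0 < gY y) :
    (fun ω ↦ log (p ω / (pX (X ω) * pY (Y ω)))) =ᵐ[P] fun ω ↦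
      log (p ω / g ω) - log (pX (X ω) / gX (X ω)) - log (pY (Y ω) / gY (Y ω)) +
        (log (g ω) - log (gX (X ω)) - log (gY (Y ω))) := by
  filter_upwards [hp.ae_pos, ae_of_ae_map hX.aemeasurable hpX.ae_pos,
    ae_of_ae_map hY.aemeasurable hpY.ae_pos] with ω hω hXω hYω
  rw [log_div hω.ne' (mul_pos hXω hYω).ne', log_mul hXω.ne' hYω.ne', log_div hω.ne' (hg0 ω).ne',
    log_div hXω.ne' (hgX0 _).ne', log_div hYω.ne' (hgY0 _).ne']
  ring

theorem integral_sub_sub {f₁ f₂ f₃ : Ω → ℝ} (h₁ : Integrable f₁ P) (h₂ : Integrable f₂ P)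
    (h₃ : Integrable f₃ P) :
    ∫ ω, f₁ ω - f₂ ω - f₃ ω ∂P = ∫ ω, f₁ ω ∂P - ∫ ω, f₂ ω ∂P - ∫ ω, f₃ ω ∂P := by
  rw [← integral_sub h₁ h₂]
  exact integral_sub (h₁.sub h₂) h₃

variable [IsProbabilityMeasure P] [IsProbabilityMeasure G]

theorem integrable_log_div_mul_and_abs_integral_sub_le (hX : Measurable X) (hY : Measurable Y)
    (hp : HasRealDensity P μ p) (hpX : HasRealDensity (P.map X) μX pX)
    (hpY : HasRealDensity (P.map Y) μY pY) (hg : HasRealDensity G μ g)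
    (hgX : HasRealDensity (G.map X) μX gX) (hgY : HasRealDensity (G.map Y) μY gY)
    (hg0 : ∀ ω, 0 < g ω) (hgX0 : ∀ x, 0 < gX x) (hgY0 : ∀ y, 0 < gY y)
    (hlog_g : Integrable (fun ω ↦ log (g ω)) P) (hlog_gX : Integrable (fun ω ↦ log (gX (X ω))) P)
    (hlog_gY : Integrable (fun ω ↦ log (gY (Y ω))) P)
    (hint : Integrable (fun ω ↦ log (p ω / g ω)) P) :
    Integrable (fun ω ↦ log (p ω / (pX (X ω) * pY (Y ω)))) P ∧
      |∫ ω, log (p ω / (pX (X ω) * pY (Y ω))) ∂P - (∫ ω, log (g ω) ∂P -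
        ∫ ω, log (gX (X ω)) ∂P - ∫ ω, log (gY (Y ω)) ∂P)| ≤ ∫ ω, log (p ω / g ω) ∂P := by
  have hpg := hp.div_of_pos hg hg0
  have hpgX := hpX.div_of_pos hgX hgX0
  have hpgY := hpY.div_of_pos hgY hgY0
  have hintX := integrable_log_comp_of_integrable_log hX hpg hpgX hint
  have hintY := integrable_log_comp_of_integrable_log hY hpg hpgY hint
  have hdecomp := log_div_mul_ae_eq hX hY hp hpX hpY hg0 hgX0 hgY0
  have hintK := (hint.sub hintX).sub hintY
  have hintR := (hlog_g.sub hlog_gX).sub hlog_gY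
  refine ⟨(integrable_congr hdecomp).mpr (hintK.add hintR), ?_⟩
  obtain ⟨hKX0, hKXK⟩ := integral_log_comp_mem_Icc hX hpg hpgX hint
  obtain ⟨hKY0, hKYK⟩ := integral_log_comp_mem_Icc hY hpg hpgY hint
  rw [(integral_congr_ae hdecomp).trans (integral_add hintK hintR),
    integral_sub_sub hint hintX hintY, integral_sub_sub hlog_g hlog_gX hlog_gY,
    add_sub_cancel_right, abs_le]
  constructor <;> linarith

end MutualInformation

section GaussianBound

variable {ι κ : Type*} [Fintype ι] [Fintype κ] [DecidableEq ι] [DecidableEq κ]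

theorem integral_log_gaussianPdf_sub_sub {Ω : Type*} [MeasurableSpace Ω] {P : Measure Ω}
    [IsProbabilityMeasure P] {Z : Ω → ι ⊕ κ → ℝ} {c : ι ⊕ κ → ℝ} {S : Matrix (ι ⊕ κ) (ι ⊕ κ) ℝ}
    (hSpos : S.PosDef)
    (hZ : ∀ k l, Integrable (fun ω ↦ (Z ω k - c k) * (Z ω l - c l)) P)
    (hS : ∀ k l, ∫ ω, (Z ω k - c k) * (Z ω l - c l) ∂P = S k l) :
    ∫ ω, log (gaussianPdf c S (Z ω)) ∂P -
        ∫ ω, log (gaussianPdf (c ∘ Sum.inl) S.toBlocks₁₁ (Z ω ∘ Sum.inl)) ∂P -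
        ∫ ω, log (gaussianPdf (c ∘ Sum.inr) S.toBlocks₂₂ (Z ω ∘ Sum.inr)) ∂P =
      (1 / 2 : ℝ) * (log S.toBlocks₁₁.det + log S.toBlocks₂₂.det - log S.det) := by
  have hX := integral_log_gaussianPdf (P := P) (X := fun ω ↦ Z ω ∘ Sum.inl) (m := c ∘ Sum.inl)
    (S := S.toBlocks₁₁) (hSpos.submatrix Sum.inl_injective) (fun _ _ ↦ hZ _ _) fun _ _ ↦ hS _ _
  have hY := integral_log_gaussianPdf (P := P) (X := fun ω ↦ Z ω ∘ Sum.inr) (m := c ∘ Sum.inr)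
    (S := S.toBlocks₂₂) (hSpos.submatrix Sum.inr_injective) (fun _ _ ↦ hZ _ _) fun _ _ ↦ hS _ _
  rw [integral_log_gaussianPdf hSpos hZ hS, hX, hY, Fintype.card_sum, Nat.cast_add]
  ring

theorem integrable_log_div_mul_and_abs_integral_sub_log_det_le {P : Measure (ι ⊕ κ → ℝ)}
    [IsProbabilityMeasure P] {p : (ι ⊕ κ → ℝ) → ℝ} {pX : (ι → ℝ) → ℝ} {pY : (κ → ℝ) → ℝ}
    (hp : HasRealDensity P volume p) (hpX : HasRealDensity (P.map (· ∘ Sum.inl)) volume pX)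
    (hpY : HasRealDensity (P.map (· ∘ Sum.inr)) volume pY)
    {c : ι ⊕ κ → ℝ} {S : Matrix (ι ⊕ κ) (ι ⊕ κ) ℝ} (hSpos : S.PosDef)
    (hmoment : ∀ k l, Integrable (fun z ↦ (z k - c k) * (z l - c l)) P)
    (hS : ∀ k l, ∫ z, (z k - c k) * (z l - c l) ∂P = S k l)
    (hint : Integrable (fun z ↦ log (p z / gaussianPdf c S z)) P) :
    Integrable (fun z ↦ log (p z / (pX (z ∘ Sum.inl) * pY (z ∘ Sum.inr)))) P ∧
      |∫ z, log (p z / (pX (z ∘ Sum.inl) * pY (z ∘ Sum.inr))) ∂P -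
        (1 / 2 : ℝ) * (log S.toBlocks₁₁.det + log S.toBlocks₂₂.det - log S.det)| ≤
      ∫ z, log (p z / gaussianPdf c S z) ∂P := by
  have hposX : S.toBlocks₁₁.PosDef := hSpos.submatrix Sum.inl_injective
  have hposY : S.toBlocks₂₂.PosDef := hSpos.submatrix Sum.inr_injective
  rw [← integral_log_gaussianPdf_sub_sub hSpos hmoment hS]
  exact integrable_log_div_mul_and_abs_integral_sub_le (by fun_prop) (by fun_prop) hp hpX hpY
    (hasRealDensity_gaussianPdf c hSpos)
    (hasRealDensity_gaussianMeasure_map_comp c hSpos Sum.inl_injective)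
    (hasRealDensity_gaussianMeasure_map_comp c hSpos Sum.inr_injective)
    (gaussianPdf_pos c hSpos) (gaussianPdf_pos _ hposX) (gaussianPdf_pos _ hposY)
    (integrable_log_gaussianPdf hSpos hmoment)
    (integrable_log_gaussianPdf hposX fun _ _ ↦ hmoment _ _)
    (integrable_log_gaussianPdf hposY fun _ _ ↦ hmoment _ _) hint

theorem mutual_information_gaussian_error_bound_general
    {p : (ι ⊕ κ → ℝ) → ℝ} (hp_meas : Measurable p) (hp_nonneg : ∀ z, 0 ≤ p z)
    (hp_int : ∫ z, p z = 1)
    {pX : (ι → ℝ) → ℝ} (hpX : ∀ x, pX x = ∫ y, p (Sum.elim x y))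
    {pY : (κ → ℝ) → ℝ} (hpY : ∀ y, pY y = ∫ x, p (Sum.elim x y))
    {c : ι ⊕ κ → ℝ} {S : Matrix (ι ⊕ κ) (ι ⊕ κ) ℝ}
    (hmoment : ∀ k l, Integrable fun z ↦ p z * ((z k - c k) * (z l - c l)))
    (hS : ∀ k l, ∫ z, p z * ((z k - c k) * (z l - c l)) = S k l) (hSpos : S.PosDef)
    (hint : Integrable fun z ↦ p z * log (p z / gaussianPdf c S z)) :
    Integrable (fun z ↦ p z * log (p z / (pX (z ∘ Sum.inl) * pY (z ∘ Sum.inr)))) ∧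
      |(∫ z, p z * log (p z / (pX (z ∘ Sum.inl) * pY (z ∘ Sum.inr)))) -
        (1 / 2 : ℝ) * (log S.toBlocks₁₁.det + log S.toBlocks₂₂.det - log S.det)| ≤
      ∫ z, p z * log (p z / gaussianPdf c S z) := by
  have hp : HasRealDensity (volume.withDensity fun z ↦ ENNReal.ofReal (p z)) volume p :=
    ⟨hp_meas, hp_nonneg, rfl⟩
  have := hp.isProbabilityMeasure hp_int
  have hp_integrable := integrable_of_integral_eq_one hp_int
  obtain rfl : pX = _ := funext hpX
  obtain rfl : pY = _ := funext hpY
  simp only [← hp.integral_eq, ← hp.integrable_iff] at hmoment hS hint ⊢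
  exact integrable_log_div_mul_and_abs_integral_sub_log_det_le hp
    (hp.map_comp_inl hp_integrable) (hp.map_comp_inr hp_integrable) hSpos hmoment hS hint

end GaussianBound

/-- Let `(ξ, η)` be an absolutely continuous pair of random vectors with
joint density `p`, mean `m`, and non-singular covariance matrix `S` with diagonal blocks
`Sxx = Cov(ξ)` and `Syy = Cov(η)`.  Then

`|I(ξ; η) − (1/2)[log det Sxx + log det Syy − log det S]| ≤ D_KL(p ‖ N(m, S))`.

The joint vector `(ξ, η)` is modelled as a random vector indexed by `Fin dx ⊕ Fin dy`,
with `ξ` the `Sum.inl` coordinates and `η` the `Sum.inr` coordinates. -/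
theorem mutual_information_gaussian_error_bound
    (dx dy : ℕ)
    -- joint density of (ξ, η) on ℝ^{dx+dy} and its marginals
    (p : ((Fin dx ⊕ Fin dy) → ℝ) → ℝ)
    (hp_meas : Measurable p)
    (hp_nonneg : ∀ z, 0 ≤ p z)
    (hp_int : ∫ z, p z = 1)
    (pX : (Fin dx → ℝ) → ℝ) (hpX : ∀ x, pX x = ∫ y : Fin dy → ℝ, p (Sum.elim x y))
    (pY : (Fin dy → ℝ) → ℝ) (hpY : ∀ y, pY y = ∫ x : Fin dx → ℝ, p (Sum.elim x y))
    -- on the support of p the marginal densities of p are positive (holds a.e.)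
    (hp_supp : ∀ᵐ z : (Fin dx ⊕ Fin dy) → ℝ ∂volume,
      0 < p z → 0 < pX (fun i => z (Sum.inl i)) ∧ 0 < pY (fun j => z (Sum.inr j)))
    -- mean and covariance matrix of (ξ, η), with block structure
    (m : (Fin dx ⊕ Fin dy) → ℝ)
    (S : Matrix (Fin dx ⊕ Fin dy) (Fin dx ⊕ Fin dy) ℝ)
    (h_moment₁ : ∀ k, Integrable fun z : (Fin dx ⊕ Fin dy) → ℝ => p z * z k)
    (hm : ∀ k, (∫ z : (Fin dx ⊕ Fin dy) → ℝ, p z * z k) = m k)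
    (h_moment₂ : ∀ k l, Integrable fun z : (Fin dx ⊕ Fin dy) → ℝ =>
      p z * ((z k - m k) * (z l - m l)))
    (hScov : ∀ k l, (∫ z : (Fin dx ⊕ Fin dy) → ℝ, p z * ((z k - m k) * (z l - m l))) = S k l)
    (hS_posdef : S.PosDef)
    (Sxx : Matrix (Fin dx) (Fin dx) ℝ) (Sxy : Matrix (Fin dx) (Fin dy) ℝ)
    (Syx : Matrix (Fin dy) (Fin dx) ℝ) (Syy : Matrix (Fin dy) (Fin dy) ℝ)
    (hblocks : S = Matrix.fromBlocks Sxx Sxy Syx Syy)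
    -- integrability of all the integrands involved
    (h_int_I : Integrable fun z : (Fin dx ⊕ Fin dy) → ℝ =>
      p z * Real.log (p z / (pX (fun i => z (Sum.inl i)) * pY (fun j => z (Sum.inr j)))))
    (h_int_KL : Integrable fun z : (Fin dx ⊕ Fin dy) → ℝ =>
      p z * Real.log (p z / gaussianPdf m S z))
    (h_int_KLm : Integrable fun z : (Fin dx ⊕ Fin dy) → ℝ =>
      pX (fun i => z (Sum.inl i)) * pY (fun j => z (Sum.inr j)) *
        Real.log ((pX (fun i => z (Sum.inl i)) * pY (fun j => z (Sum.inr j)))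
          / gaussianPdf m (Matrix.fromBlocks Sxx 0 0 Syy) z))
    (h_int_pp : Integrable fun z : (Fin dx ⊕ Fin dy) → ℝ => p z * Real.log (p z)) :
    -- |I(ξ; η) − (1/2)[log det Sxx + log det Syy − log det S]| ≤ D_KL(p ‖ N(m, S))
    |(∫ z : (Fin dx ⊕ Fin dy) → ℝ,
        p z * Real.log (p z / (pX (fun i => z (Sum.inl i)) * pY (fun j => z (Sum.inr j)))))
        - (1 / 2 : ℝ) * (Real.log Sxx.det + Real.log Syy.det - Real.log S.det)|
      ≤ ∫ z : (Fin dx ⊕ Fin dy) → ℝ, p z * Real.log (p z / gaussianPdf m S z) := by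
  subst hblocks
  exact (mutual_information_gaussian_error_bound_general hp_meas hp_nonneg hp_int hpX hpY
    h_moment₂ hScov hS_posdef h_int_KL).2
end

section
/- Let ε > 0, let X ∼ U[0, 1] and Z ∼ U[−ε, ε] be independent uniform random variables, and let Y = X + Z. Then the mutual information is I(X; Y) = ε − log(2ε) if ε < 1/2, and I(X; Y) = 1/(4ε) if ε ≥ 1/2. -/
open MeasureTheory Real

/-!
Let `S` be the support of the joint density and `w y` the measure of its fibre over `y`. The joint
density is constant on `S` and the density of `Y` is proportional to `w`, so for `X` uniform on a
set of measure `L` the likelihood ratio on `S` is `L / w y`. This depends on `y` only, and the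
second marginal of the reference measure restricted to `S` has density `w`, so `I(X; Y)` is the
average of `log (L / w)` weighted by `w`. For intervals of lengths `L` and `K`, `w` is a trapezoid
of height `m = min L K` with sides of slope `±1`. Each side contributes `∫₀ᵐ t log (L / t) dt`, and
the plateau has length `max L K - m`.
-/

section Fibre

variable {α β E : Type*} [MeasurableSpace α] [MeasurableSpace β]
  [NormedAddCommGroup E] [NormedSpace ℝ E]
  {μ : Measure α} {ν : Measure β} [SFinite μ] [SFinite ν] {s : Set (α × β)}

lemma map_snd_restrict_prod (hs : MeasurableSet s) :
    ((μ.prod ν).restrict s).map Prod.snd =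
      ν.withDensity fun y => μ ((fun x => (x, y)) ⁻¹' s) := by
  ext t ht
  rw [Measure.map_apply measurable_snd ht, Measure.restrict_apply (measurable_snd ht),
    Measure.prod_apply_symm ((measurable_snd ht).inter hs), withDensity_apply _ ht,
    ← lintegral_indicator ht]
  refine lintegral_congr fun y => ?_
  by_cases hy : y ∈ t <;> simp [hy, Set.preimage_preimage]

lemma setIntegral_prod_comp_snd (hs : MeasurableSet s)
    (hfin : ∀ᵐ y ∂ν, μ ((fun x => (x, y)) ⁻¹' s) < ⊤) {g : β → E}
    (hg : AEStronglyMeasurable g ν) :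
    ∫ z in s, g z.2 ∂μ.prod ν = ∫ y, μ.real ((fun x => (x, y)) ⁻¹' s) • g y ∂ν := by
  have hmap := map_snd_restrict_prod (μ := μ) (ν := ν) hs
  have hg' : AEStronglyMeasurable g (((μ.prod ν).restrict s).map Prod.snd) :=
    hg.mono_ac (hmap ▸ withDensity_absolutelyContinuous _ _)
  rw [← integral_map measurable_snd.aemeasurable hg', hmap,
    integral_withDensity_eq_integral_toReal_smul (measurable_measure_prodMk_right hs) hfin]
  rfl

lemma integral_indicator_const_mul_log_ratio (hs : MeasurableSet s)
    (hfin : ∀ᵐ y ∂ν, μ ((fun x => (x, y)) ⁻¹' s) < ⊤) (c L : ℝ) {p : α × β → ℝ} {q : α → ℝ}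
    (hp : ∀ z, p z = s.indicator (fun _ => c) z) (hq : ∀ z ∈ s, q z.1 = L⁻¹) :
    ∫ z, p z * log (p z / (q z.1 * ∫ x, p (x, z.2) ∂μ)) ∂μ.prod ν =
      c * ∫ y, μ.real ((fun x => (x, y)) ⁻¹' s) *
        log (L / μ.real ((fun x => (x, y)) ⁻¹' s)) ∂ν := by
  let w : β → ℝ := fun y => μ.real ((fun x => (x, y)) ⁻¹' s)
  have hw : Measurable w := (measurable_measure_prodMk_right hs).ennreal_toReal
  have hmarginal : ∀ y, ∫ x, p (x, y) ∂μ = w y * c := by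
    intro y
    simp only [hp]
    exact integral_indicator_const c (measurable_prodMk_right hs)
  have hratio : ∀ z, p z * log (p z / (q z.1 * ∫ x, p (x, z.2) ∂μ)) =
      s.indicator (fun z => c * log (L / w z.2)) z := by
    intro z
    by_cases hz : z ∈ s
    · -- Where `w` vanishes, both ratios are `0` by the convention `x / 0 = 0`.
      rw [hp, Set.indicator_of_mem hz, Set.indicator_of_mem hz, hq z hz, hmarginal]
      rcases eq_or_ne c 0 with rfl | hc
      · simp only [zero_mul]
      · rw [← mul_assoc, div_mul_cancel_right₀ hc, mul_inv, inv_inv, div_eq_mul_inv]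
    · rw [hp, Set.indicator_of_notMem hz, Set.indicator_of_notMem hz, zero_mul]
  simp only [hratio]
  rw [integral_indicator hs, integral_const_mul,
    setIntegral_prod_comp_snd (g := fun y => log (L / w y)) hs hfin
      (measurable_log.comp (measurable_const.div hw)).aestronglyMeasurable]
  rfl

end Fibre

lemma integral_uniform_add_mul_log_ratio {G : Type*} [AddGroup G] [MeasurableSpace G]
    [MeasurableSub₂ G] {μ ν : Measure G} [SFinite μ] [SFinite ν] {A B : Set G}
    (hA : MeasurableSet A) (hB : MeasurableSet B) (hμA : μ A ≠ ⊤) (L K : ℝ) {pX pZ pY : G → ℝ}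
    (hpX : ∀ x, pX x = A.indicator (fun _ => L⁻¹) x)
    (hpZ : ∀ z, pZ z = B.indicator (fun _ => K⁻¹) z)
    (hpY : ∀ y, pY y = ∫ x, pX x * pZ (y - x) ∂μ) :
    ∫ z : G × G, pX z.1 * pZ (z.2 - z.1) *
        log (pX z.1 * pZ (z.2 - z.1) / (pX z.1 * pY z.2)) ∂μ.prod ν =
      (L * K)⁻¹ * ∫ y, μ.real (A ∩ (fun x => y - x) ⁻¹' B) *
        log (L / μ.real (A ∩ (fun x => y - x) ⁻¹' B)) ∂ν := by
  let S : Set (G × G) := {z | z.1 ∈ A ∧ z.2 - z.1 ∈ B}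
  have hS : MeasurableSet S :=
    (measurable_fst hA).inter ((measurable_snd.sub measurable_fst) hB)
  have hfin : ∀ y, μ ((fun x => (x, y)) ⁻¹' S) < ⊤ := fun y =>
    (measure_mono fun _ hx => hx.1).trans_lt hμA.lt_top
  have hjoint : ∀ z : G × G,
      pX z.1 * pZ (z.2 - z.1) = S.indicator (fun _ => (L * K)⁻¹) z := by
    rintro ⟨x, y⟩
    by_cases hx : x ∈ A <;> by_cases hz : y - x ∈ B <;> simp [S, hpX, hpZ, hx, hz, mul_comm]
  have hX : ∀ z ∈ S, pX z.1 = L⁻¹ := fun z hz => by rw [hpX, Set.indicator_of_mem hz.1]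
  simp only [hpY]
  exact integral_indicator_const_mul_log_ratio hS (.of_forall hfin) _ L hjoint hX

/-- The trapezoidal profile supported on `[p, q]`, with height `m` and sides of slope `±1`; up to
normalization, the density of a sum of two independent uniform variables. -/
noncomputable def trapezoid (p q m y : ℝ) : ℝ := max 0 (min m (min (y - p) (q - y)))

section Trapezoid

variable {p q m y : ℝ}

lemma trapezoid_eq_zero (hy : y ∉ Set.Ioc p q) : trapezoid p q m y = 0 := by
  grind [trapezoid]

lemma eqOn_trapezoid_left (h₀ : 0 ≤ m) (hm : 2 * m ≤ q - p) :
    Set.EqOn (trapezoid p q m) (fun y => y - p) (Set.uIcc p (p + m)) := by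
  rw [Set.uIcc_of_le (by linarith)]
  grind [trapezoid, Set.EqOn]

lemma eqOn_trapezoid_plateau (h₀ : 0 ≤ m) (hm : 2 * m ≤ q - p) :
    Set.EqOn (trapezoid p q m) (fun _ => m) (Set.uIcc (p + m) (q - m)) := by
  rw [Set.uIcc_of_le (by linarith)]
  grind [trapezoid, Set.EqOn]

lemma eqOn_trapezoid_right (h₀ : 0 ≤ m) (hm : 2 * m ≤ q - p) :
    Set.EqOn (trapezoid p q m) (fun y => q - y) (Set.uIcc (q - m) q) := by
  rw [Set.uIcc_of_le (by linarith)]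
  grind [trapezoid, Set.EqOn]

lemma volume_real_Icc_inter_preimage_sub_Icc (a b c d y : ℝ) :
    volume.real (Set.Icc a b ∩ (fun x => y - x) ⁻¹' Set.Icc c d) =
      trapezoid (a + c) (b + d) (min (b - a) (d - c)) y := by
  rw [Set.preimage_const_sub_Icc, Set.Icc_inter_Icc, Real.volume_real_Icc]
  grind [trapezoid]

lemma integral_comp_trapezoid {E : Type*} [NormedAddCommGroup E] [NormedSpace ℝ E]
    [CompleteSpace E] {F : ℝ → E} (h₀ : 0 ≤ m) (hm : 2 * m ≤ q - p)
    (hF : IntervalIntegrable F volume 0 m) (hF₀ : F 0 = 0) :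
    ∫ y, F (trapezoid p q m y) = (2 : ℝ) • (∫ t in 0..m, F t) + (q - p - 2 * m) • F m := by
  have hrise : Set.EqOn (fun y => F (trapezoid p q m y)) (fun y => F (y - p))
      (Set.uIcc p (p + m)) := (eqOn_trapezoid_left h₀ hm).comp_left
  have hplateau : Set.EqOn (fun y => F (trapezoid p q m y)) (fun _ => F m)
      (Set.uIcc (p + m) (q - m)) := (eqOn_trapezoid_plateau h₀ hm).comp_left
  have hfall : Set.EqOn (fun y => F (trapezoid p q m y)) (fun y => F (q - y))
      (Set.uIcc (q - m) q) := (eqOn_trapezoid_right h₀ hm).comp_left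
  have hint_rise : IntervalIntegrable (fun y => F (trapezoid p q m y)) volume p (p + m) := by
    have h := hF.comp_sub_right p
    rw [zero_add, add_comm m p] at h
    exact h.congr (hrise.symm.mono Set.uIoc_subset_uIcc)
  have hint_plateau :
      IntervalIntegrable (fun y => F (trapezoid p q m y)) volume (p + m) (q - m) :=
    intervalIntegrable_const.congr (hplateau.symm.mono Set.uIoc_subset_uIcc)
  have hint_fall : IntervalIntegrable (fun y => F (trapezoid p q m y)) volume (q - m) q := by
    have h := (hF.comp_sub_left q).symm
    rw [sub_zero] at h
    exact h.congr (hfall.symm.mono Set.uIoc_subset_uIcc)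
  calc ∫ y, F (trapezoid p q m y)
      = ∫ y in p..q, F (trapezoid p q m y) := by
        rw [intervalIntegral.integral_of_le (by linarith),
          setIntegral_eq_integral_of_forall_compl_eq_zero]
        intro y hy
        rw [trapezoid_eq_zero hy, hF₀]
    _ = (∫ y in p..(p + m), F (y - p)) + (∫ _ in (p + m)..(q - m), F m) +
          ∫ y in (q - m)..q, F (q - y) := by
        rw [← intervalIntegral.integral_congr hrise, ← intervalIntegral.integral_congr hplateau,
          ← intervalIntegral.integral_congr hfall,
          intervalIntegral.integral_add_adjacent_intervals hint_rise hint_plateau,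
          intervalIntegral.integral_add_adjacent_intervals (hint_rise.trans hint_plateau)
            hint_fall]
    _ = (2 : ℝ) • (∫ t in 0..m, F t) + (q - p - 2 * m) • F m := by
        rw [intervalIntegral.integral_comp_sub_right, intervalIntegral.integral_comp_sub_left,
          intervalIntegral.integral_const, sub_self, add_sub_cancel_left, sub_self,
          sub_sub_cancel, two_smul]
        module

end Trapezoid

section LogDiv

variable {L : ℝ}

lemma continuous_mul_log_div (hL : L ≠ 0) : Continuous fun t : ℝ => t * log (L / t) := by
  have h : (fun t : ℝ => t * log (L / t)) = fun t => t * log L - t * log t := by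
    funext t
    rcases eq_or_ne t 0 with rfl | ht
    · simp
    · rw [log_div hL ht, mul_sub]
  rw [h]
  exact (continuous_id.mul continuous_const).sub continuous_mul_log

lemma integral_mul_log_div (hL : L ≠ 0) (m : ℝ) :
    ∫ t in 0..m, t * log (L / t) = m ^ 2 / 2 * log (L / m) + m ^ 2 / 4 := by
  have hcont := continuous_mul_log_div hL
  have hderiv : ∀ t ≠ 0,
      HasDerivAt (fun t => t * (t * log (L / t)) / 2 + t ^ 2 / 4) (t * log (L / t)) t := by
    intro t ht
    have hlog : HasDerivAt (fun t => log (L / t)) (-t⁻¹) t :=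
      (((hasDerivAt_inv ht).const_mul L).log (mul_ne_zero hL (inv_ne_zero ht))).congr_deriv
        (by field)
    refine ((((hasDerivAt_id t).fun_mul ((hasDerivAt_id t).fun_mul hlog)).div_const 2).fun_add
      (((hasDerivAt_id t).fun_pow 2).div_const 4)).congr_deriv ?_
    simp only [id]
    field
  rw [integral_eq_of_hasDerivAt_off_countable _ _ (Set.countable_singleton 0)
    (by fun_prop) (fun t ht => hderiv t ht.2) (hcont.intervalIntegrable 0 m)]
  ring

lemma integral_trapezoid_mul_log_div {p q m : ℝ} (hL : L ≠ 0) (h₀ : 0 ≤ m)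
    (hm : 2 * m ≤ q - p) :
    ∫ y, trapezoid p q m y * log (L / trapezoid p q m y) =
      (q - p - m) * (m * log (L / m)) + m ^ 2 / 2 := by
  rw [integral_comp_trapezoid (F := fun t => t * log (L / t)) h₀ hm
    ((continuous_mul_log_div hL).intervalIntegrable _ _) (zero_mul _), integral_mul_log_div hL]
  simp only [smul_eq_mul]
  ring

end LogDiv

theorem smoothed_uniform_mutual_information_general {a b c d : ℝ} (hab : a < b) (hcd : c < d)
    {pX pZ pY : ℝ → ℝ}
    (hpX : ∀ x, pX x = if x ∈ Set.Icc a b then (b - a)⁻¹ else 0)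
    (hpZ : ∀ z, pZ z = if z ∈ Set.Icc c d then (d - c)⁻¹ else 0)
    (hpY : ∀ y, pY y = ∫ x, pX x * pZ (y - x)) :
    ∫ z : ℝ × ℝ, pX z.1 * pZ (z.2 - z.1) *
        log (pX z.1 * pZ (z.2 - z.1) / (pX z.1 * pY z.2)) =
      log ((b - a) / min (b - a) (d - c)) +
        min (b - a) (d - c) / (2 * max (b - a) (d - c)) := by
  set m := min (b - a) (d - c)
  set n := max (b - a) (d - c)
  have hL : 0 < b - a := sub_pos.2 hab
  have hm : 0 < m := lt_min hL (sub_pos.2 hcd)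
  have hmn : m ≤ n := min_le_max
  have hprod : (b - a) * (d - c) = m * n := (min_mul_max _ _).symm
  have hsum : m + n = b - a + (d - c) := min_add_max _ _
  have hn : n = b + d - (a + c) - m := by linarith
  rw [Measure.volume_eq_prod, integral_uniform_add_mul_log_ratio measurableSet_Icc
    measurableSet_Icc measure_Icc_lt_top.ne (b - a) (d - c)
    (fun x => by rw [hpX, Set.indicator_apply]) (fun z => by rw [hpZ, Set.indicator_apply]) hpY]
  simp only [volume_real_Icc_inter_preimage_sub_Icc]
  rw [integral_trapezoid_mul_log_div hL.ne' hm.le (by linarith), hprod, ← hn]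
  have hn₀ : n ≠ 0 := (hm.trans_le hmn).ne'
  field

/-- Let `ε > 0`, let `X ∼ U[0, 1]` and `Z ∼ U[−ε, ε]` be independent
uniform random variables, and let `Y = X + Z`.  Then the mutual information is

`I(X; Y) = ε − log (2ε)` if `ε < 1/2`, and `I(X; Y) = 1/(4ε)` if `ε ≥ 1/2`.

Here `pX` and `pZ` are the densities of `X` and `Z`; by independence the pair `(X, Y)`
has joint density `(x, y) ↦ pX x * pZ (y − x)`, `Y` has density
`pY y = ∫ pX x * pZ (y − x) dx` (the convolution `pX * pZ`), and the mutual information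
is `I(X; Y) = E[log (p_{X,Y}(X,Y) / (pX X * pY Y))]`. -/
theorem smoothed_uniform_mutual_information
    (ε : ℝ) (hε : 0 < ε)
    (pX pZ pY : ℝ → ℝ)
    (hpX : ∀ x, pX x = if x ∈ Set.Icc (0 : ℝ) 1 then 1 else 0)
    (hpZ : ∀ z, pZ z = if z ∈ Set.Icc (-ε) ε then 1 / (2 * ε) else 0)
    (hpY : ∀ y, pY y = ∫ x, pX x * pZ (y - x)) :
    (∫ z : ℝ × ℝ, (pX z.1 * pZ (z.2 - z.1)) *
        Real.log ((pX z.1 * pZ (z.2 - z.1)) / (pX z.1 * pY z.2)))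
      = if ε < 1 / 2 then ε - Real.log (2 * ε) else (4 * ε)⁻¹ := by
  have hlen : ε - -ε = 2 * ε := by ring
  rw [smoothed_uniform_mutual_information_general zero_lt_one (neg_lt_self hε)
    (by simpa only [sub_zero, inv_one] using hpX) (by simpa only [hlen, one_div] using hpZ) hpY,
    sub_zero, hlen]
  split_ifs with h
  · rw [min_eq_right (by linarith), max_eq_left (by linarith), one_div, log_inv]
    ring
  · rw [min_eq_left (by linarith), max_eq_right (by linarith), div_one, log_one]
    ring
end
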